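/- arXiv:2210.00785 — 2 statements merged into one kernel-verified Lean document; each statement's English description precedes it below -/
import Mathlib

section
/- Let d ≥ 1. Let h : Fin m → ℝ^d be a family with h i ≠ 0 for all i and with h i not a nonnegative scalar multiple of h j for i ≠ j. Let G₁,…,Gₙ ⊆ ℝ^d be finite sets and let I₁,…,I_k be a partition of {1,…,n} such that span(G_i) = span(G_j) whenever i and j lie in the same class I_ℓ. Then {∑_i a_i • h i | ∀ i, 0 < a_i ≤ 1} + ∑_{i=1}^n (pos(G_i) ∪ {0}) = (relint(zono(h)) ∪ adj(h)) + ∑_{j=1}^k (relint(cone(⋃_{i ∈ I_j} G_i)) ∪ {0}), where both sides are iterated Minkowski sums. (Theorem 3: the reachability set of a linear path scheme is the Minkowski sum of the path's zonotope part and one relative-interior-of-cone term per class of cycles with a common span.) -/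
open Pointwise

/-- The zonotope generated by a finite family `g : Fin n → ℝ^d`:
all combinations `∑ i, a i • g i` with coefficients `a i ∈ [0,1]`. -/
def zonoSet {d n : ℕ} (g : Fin n → (Fin d → ℝ)) : Set (Fin d → ℝ) :=
  {x | ∃ a : Fin n → ℝ, (∀ i, 0 ≤ a i ∧ a i ≤ 1) ∧ x = ∑ i, a i • g i}

/-- A face of the zonotope of `g`: a nonempty subset of the zonotope on which
some linear functional attains its maximum over the zonotope. -/
def IsZonoFace {d n : ℕ} (g : Fin n → (Fin d → ℝ)) (F : Set (Fin d → ℝ)) : Prop :=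
  F.Nonempty ∧ ∃ l : (Fin d → ℝ) →ₗ[ℝ] ℝ,
    F = {x | x ∈ zonoSet g ∧ ∀ y ∈ zonoSet g, l y ≤ l x}

/-- `adjSet g` : the union of `{σ_g}` (where `σ_g = ∑ i, g i`) with the
relative interiors of all faces of the zonotope of `g` containing `σ_g`. -/
def adjSet {d n : ℕ} (g : Fin n → (Fin d → ℝ)) : Set (Fin d → ℝ) :=
  {∑ i, g i} ∪
    ⋃ F ∈ {F | IsZonoFace g F ∧ (∑ i, g i) ∈ F}, intrinsicInterior ℝ F

/-- The convex cone of a finite set `G ⊆ ℝ^d`: all nonnegative combinations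
of elements of `G`. -/
def coneF {d : ℕ} (G : Finset (Fin d → ℝ)) : Set (Fin d → ℝ) :=
  {x | ∃ a : (Fin d → ℝ) → ℝ, (∀ v ∈ G, 0 ≤ a v) ∧ x = ∑ v ∈ G, a v • v}

/-- The set of strictly positive combinations of a finite set `G ⊆ ℝ^d`. -/
def posF {d : ℕ} (G : Finset (Fin d → ℝ)) : Set (Fin d → ℝ) :=
  {x | ∃ a : (Fin d → ℝ) → ℝ, (∀ v ∈ G, 0 < a v) ∧ x = ∑ v ∈ G, a v • v}

/-!
A combination of the `h i` with coefficients in `(0, 1]` is a point of an open segment joining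
`σ = ∑ i, h i` to a point of the zonotope. In a polytope these are exactly the points in the
relative interior of a face through `σ`: by Farkas' lemma the cone of feasible directions at a
point `x` carries a functional which is nonnegative on it and vanishes only on its lineality space,
and the face this functional exposes has `x` in its relative interior.

Let `C` be the sum of cones `C i` with a common span. Then `relint (C i) ⊆ relint C`, and
`relint C + C ⊆ relint C`. Conversely, choose `p i ∈ relint (C i)`. A point of `relint C` lies on
an open segment from `∑ i, p i` to some `∑ i, μ i` with `μ i ∈ C i`, and splitting its two
coefficients over `i` writes it as a sum of points in open segments from `p i` to `μ i`, which lie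
in `relint (C i)`.
-/

section OrderedField

open Set

variable {K E ι : Type*} [Field K] [LinearOrder K] [IsStrictOrderedRing K]
  [AddCommGroup E] [Module K E] {s : Set E} {x y w : E}

theorem dual_nonneg_of_mem_hull {l : Module.Dual K E} (hl : ∀ x ∈ s, 0 ≤ l x)
    (hx : x ∈ PointedCone.hull K s) : 0 ≤ l x :=
  (Submodule.span_le.2 hl : PointedCone.hull K s ≤ (PointedCone.positive K K).comap l) hx

theorem mem_hull_image_of_forall_dual_nonneg (s : Finset ι) (v : ι → E)
    (hw : ∀ l : Module.Dual K E, (∀ i ∈ s, 0 ≤ l (v i)) → 0 ≤ l w) :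
    w ∈ PointedCone.hull K (v '' s) := by
  classical
  induction s using Finset.induction_on generalizing v w with
  | empty =>
    have hw0 : w = 0 := (Module.forall_dual_apply_eq_zero_iff K w).1 fun l ↦
      le_antisymm (by simpa using hw (-l)) (by simpa using hw l)
    simp [hw0]
  | insert a s _ ih =>
    simp only [Finset.forall_mem_insert] at hw
    rw [Finset.coe_insert, image_insert_eq]
    by_cases! hsep : ∀ l : Module.Dual K E, (∀ i ∈ s, 0 ≤ l (v i)) → 0 ≤ l w
    · exact Submodule.span_mono (subset_insert _ _) (ih v hsep)
    obtain ⟨l, hl, hlw⟩ := hsep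
    have hla : l (v a) < 0 := by
      by_contra! h
      exact hlw.not_ge (hw l ⟨h, hl⟩)
    -- Project along `v a` onto `ker l` and apply the induction hypothesis to the projected vectors.
    let π : E →ₗ[K] E := .id - l.smulRight ((l (v a))⁻¹ • v a)
    have hπ (x : E) : π x = x - (l x / l (v a)) • v a := by
      simp [π, smul_smul, div_eq_mul_inv]
    have hπw : π w ∈ PointedCone.hull K ((π ∘ v) '' s) :=
      ih (π ∘ v) fun l' hl' ↦ hw (l' ∘ₗ π) ⟨by simp [hπ, hla.ne], hl'⟩
    have hmap : PointedCone.hull K ((π ∘ v) '' s) = (PointedCone.hull K (v '' s)).map π := by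
      rw [image_comp]
      exact Submodule.span_image (π.restrictScalars {c : K // 0 ≤ c})
    rw [hmap, PointedCone.mem_map] at hπw
    obtain ⟨c, hc, hcw⟩ := hπw
    have hlc : 0 ≤ l c := dual_nonneg_of_mem_hull (by simpa using hl) hc
    have hcoeff : 0 ≤ (l w - l c) / l (v a) := div_nonneg_of_nonpos (by linarith) hla.le
    have hw_eq : w = (⟨_, hcoeff⟩ : {c : K // 0 ≤ c}) • v a + c := by
      rw [hπ, hπ, sub_eq_sub_iff_add_eq_add] at hcw
      change w = ((l w - l c) / l (v a)) • v a + c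
      rw [sub_div, sub_smul, sub_add_eq_add_sub, add_comm _ c, hcw, add_sub_cancel_right]
    rw [hw_eq]
    exact Submodule.mem_span_insert.2 ⟨_, c, hc, rfl⟩

theorem exists_dual_nonneg_and_neg_mem_of_fg {C : PointedCone K E} (hC : C.FG) :
    ∃ l : Module.Dual K E, ∀ x ∈ C, 0 ≤ l x ∧ (l x = 0 → -x ∈ C) := by
  obtain ⟨s, rfl⟩ := hC
  have hsep (v : E) : ∃ l : Module.Dual K E, (∀ x ∈ s, 0 ≤ l x) ∧
      (l v ≤ 0 → -v ∈ PointedCone.hull K (s : Set E)) := by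
    by_contra! h
    refine (h 0 (by simp)).2 ?_
    simpa using mem_hull_image_of_forall_dual_nonneg s id (w := -v)
      fun l hl ↦ by simpa using (h l hl).1
  choose l hl hlneg using hsep
  refine ⟨∑ v ∈ s, l v, fun x hx ↦ ?_⟩
  induction hx using Submodule.span_induction with
  | mem x hx =>
    have hle : l x x ≤ (∑ v ∈ s, l v) x := by
      simpa using Finset.single_le_sum (f := fun v ↦ l v x) (fun v _ ↦ hl v x hx) hx
    exact ⟨(hl x x hx).trans hle, fun h ↦ hlneg x (hle.trans_eq h)⟩
  | zero => simp
  | add x y _ _ ihx ihy =>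
    rw [map_add]
    refine ⟨add_nonneg ihx.1 ihy.1, fun h ↦ ?_⟩
    rw [add_eq_zero_iff_of_nonneg ihx.1 ihy.1] at h
    rw [neg_add]
    exact add_mem (ihx.2 h.1) (ihy.2 h.2)
  | smul c x _ ihx =>
    rw [← Nonneg.coe_smul, map_smul, smul_eq_mul, mul_eq_zero]
    refine ⟨mul_nonneg c.2 ihx.1, ?_⟩
    rintro (hc | hx)
    · simp [hc]
    · rw [← smul_neg]
      exact Submodule.smul_mem _ c (ihx.2 hx)

theorem sub_mem_hull_neg_vadd (hy : y ∈ convexHull K s) :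
    y - x ∈ PointedCone.hull K (-x +ᵥ s) := by
  have hle : -x +ᵥ convexHull K s ⊆ PointedCone.hull K (-x +ᵥ s) := by
    rw [← convexHull_vadd]
    exact convexHull_min Submodule.subset_span (PointedCone.convex _)
  simpa [sub_eq_neg_add] using hle (vadd_mem_vadd_set hy)

theorem exists_eq_smul_sub_of_mem_hull_neg_vadd (hx : x ∈ convexHull K s)
    (hw : w ∈ PointedCone.hull K (-x +ᵥ s)) :
    ∃ c : K, 0 < c ∧ ∃ y ∈ convexHull K s, w = c • (y - x) := by
  have h0 : (ConvexCone.hull K (-x +ᵥ convexHull K s)).Pointed :=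
    ConvexCone.subset_hull ⟨x, hx, by simp⟩
  have hle : PointedCone.hull K (-x +ᵥ s) ≤ (ConvexCone.hull K _).toPointedCone h0 :=
    Submodule.span_le.2 ((vadd_set_mono (subset_convexHull K s)).trans ConvexCone.subset_hull)
  obtain ⟨c, hc, _, ⟨y, hy, rfl⟩, rfl⟩ :=
    (ConvexCone.mem_hull_of_convex ((convex_convexHull K s).vadd (-x))).1 (hle hw)
  exact ⟨c, hc, y, hy, by simp [sub_eq_neg_add]⟩

end OrderedField

section IntrinsicInterior

open Set Filter Topology

section TopologicalVectorSpace

variable {E : Type*} [AddCommGroup E] [Module ℝ E] [TopologicalSpace E] {s t : Set E} {x y : E}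

theorem mem_intrinsicInterior_iff_mem_nhdsWithin :
    x ∈ intrinsicInterior ℝ s ↔ x ∈ affineSpan ℝ s ∧ s ∈ 𝓝[affineSpan ℝ s] x := by
  simp only [mem_intrinsicInterior, mem_interior_iff_mem_nhds]
  exact ⟨fun ⟨p, hp, hpx⟩ ↦ hpx ▸ ⟨p.2, preimage_coe_mem_nhds_subtype.1 hp⟩,
    fun ⟨hx, h⟩ ↦ ⟨⟨x, hx⟩, preimage_coe_mem_nhds_subtype.2 h, rfl⟩⟩

theorem intrinsicInterior_mono_of_affineSpan_eq (hst : s ⊆ t)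
    (h : affineSpan ℝ s = affineSpan ℝ t) :
    intrinsicInterior ℝ s ⊆ intrinsicInterior ℝ t := fun x hx ↦ by
  rw [mem_intrinsicInterior_iff_mem_nhdsWithin] at hx ⊢
  rw [← h]
  exact ⟨hx.1, mem_of_superset hx.2 hst⟩

variable [IsTopologicalAddGroup E] [ContinuousSMul ℝ E]

theorem exists_mem_openSegment_of_mem_intrinsicInterior (hx : x ∈ intrinsicInterior ℝ s)
    (hy : y ∈ s) : ∃ z ∈ s, x ∈ openSegment ℝ y z := by
  obtain ⟨hxs, hsx⟩ := mem_intrinsicInterior_iff_mem_nhdsWithin.1 hx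
  have hmem (t : ℝ) : AffineMap.lineMap y x t ∈ affineSpan ℝ s :=
    AffineMap.lineMap_mem t (subset_affineSpan ℝ s hy) hxs
  have hlim : Tendsto (AffineMap.lineMap y x : ℝ → E) (𝓝 1) (𝓝[affineSpan ℝ s] x) :=
    tendsto_nhdsWithin_iff.2 ⟨AffineMap.lineMap_continuous.tendsto' _ _ (by simp), .of_forall hmem⟩
  obtain ⟨t, hts, ht⟩ :=
    (((hlim.mono_left nhdsWithin_le_nhds).eventually hsx).and
      (eventually_mem_nhdsWithin (s := Ioi (1 : ℝ)))).exists
  have ht1 : (1 : ℝ) < t := ht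
  refine ⟨_, hts, ?_⟩
  convert lineMap_mem_openSegment ℝ y (AffineMap.lineMap y x t)
    (t := t⁻¹) ⟨by positivity, inv_lt_one_of_one_lt₀ ht1⟩ using 1
  simp [(zero_lt_one.trans ht1).ne']

theorem openSegment_subset_intrinsicInterior (hs : Convex ℝ s)
    (hx : x ∈ intrinsicInterior ℝ s) (hy : y ∈ s) :
    openSegment ℝ x y ⊆ intrinsicInterior ℝ s := by
  rw [openSegment_symm, openSegment_eq_image_lineMap]
  rintro _ ⟨t, ht, rfl⟩
  obtain ⟨hxs, hsx⟩ := mem_intrinsicInterior_iff_mem_nhdsWithin.1 hx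
  have hys := subset_affineSpan ℝ s hy
  refine mem_intrinsicInterior_iff_mem_nhdsWithin.2 ⟨AffineMap.lineMap_mem t hys hxs, ?_⟩
  have hlim : Tendsto (fun u ↦ AffineMap.lineMap y u t⁻¹)
      (𝓝[affineSpan ℝ s] AffineMap.lineMap y x t) (𝓝[affineSpan ℝ s] x) := by
    refine tendsto_nhdsWithin_iff.2 ⟨?_, ?_⟩
    · refine ((AffineMap.homothety_continuous y t⁻¹).tendsto' _ _ ?_).mono_left nhdsWithin_le_nhds
      simp [AffineMap.homothety_eq_lineMap, ht.1.ne']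
    · filter_upwards [self_mem_nhdsWithin] with u hu using AffineMap.lineMap_mem t⁻¹ hys hu
  filter_upwards [hlim.eventually hsx] with u hu
  simpa [ht.1.ne'] using hs.lineMap_mem hy hu (Ioo_subset_Icc_self ht)

end TopologicalVectorSpace

section NormedSpace

variable {E F : Type*} [NormedAddCommGroup E] [NormedSpace ℝ E]
  [NormedAddCommGroup F] [NormedSpace ℝ F] {s : Set E} {x y : E}

theorem intrinsicInterior_eq_interior (hs : (interior s).Nonempty) :
    intrinsicInterior ℝ s = interior s := by
  have hspan : affineSpan ℝ s = ⊤ := top_unique <|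
    isOpen_interior.affineSpan_eq_top hs ▸ affineSpan_mono ℝ interior_subset
  ext x
  simp only [mem_intrinsicInterior_iff_mem_nhdsWithin, hspan, AffineSubspace.mem_top,
    AffineSubspace.top_coe, nhdsWithin_univ, mem_interior_iff_mem_nhds, true_and]

variable [FiniteDimensional ℝ E] [FiniteDimensional ℝ F]

theorem mem_intrinsicInterior_iff_forall_exists_mem_openSegment (hs : Convex ℝ s) :
    x ∈ intrinsicInterior ℝ s ↔ x ∈ s ∧ ∀ y ∈ s, ∃ z ∈ s, x ∈ openSegment ℝ y z := by
  refine ⟨fun hx ↦ ⟨intrinsicInterior_subset hx,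
    fun y hy ↦ exists_mem_openSegment_of_mem_intrinsicInterior hx hy⟩, fun ⟨hxs, h⟩ ↦ ?_⟩
  obtain ⟨y, hy⟩ := Set.Nonempty.intrinsicInterior hs ⟨x, hxs⟩
  obtain ⟨z, hz, hxz⟩ := h y (intrinsicInterior_subset hy)
  exact openSegment_subset_intrinsicInterior hs hy hz hxz

theorem intrinsicInterior_linear_image (hs : Convex ℝ s) (f : E →ₗ[ℝ] F) :
    intrinsicInterior ℝ (f '' s) = f '' intrinsicInterior ℝ s := by
  have himage (y z : E) : f '' openSegment ℝ y z = openSegment ℝ (f y) (f z) :=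
    image_openSegment ℝ f.toAffineMap y z
  refine Subset.antisymm (fun x hx ↦ ?_) ?_
  · obtain ⟨p, hp⟩ := Set.Nonempty.intrinsicInterior hs
      (image_nonempty.1 ⟨x, intrinsicInterior_subset hx⟩)
    obtain ⟨_, ⟨z, hz, rfl⟩, hxz⟩ := exists_mem_openSegment_of_mem_intrinsicInterior hx
      (mem_image_of_mem f (intrinsicInterior_subset hp))
    rw [← himage] at hxz
    exact image_mono (openSegment_subset_intrinsicInterior hs hp hz) hxz
  · rintro _ ⟨x, hx, rfl⟩
    refine (mem_intrinsicInterior_iff_forall_exists_mem_openSegment (hs.linear_image f)).2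
      ⟨mem_image_of_mem f (intrinsicInterior_subset hx), ?_⟩
    rintro _ ⟨y, hy, rfl⟩
    obtain ⟨z, hz, hxz⟩ := exists_mem_openSegment_of_mem_intrinsicInterior hx hy
    exact ⟨f z, mem_image_of_mem f hz, himage y z ▸ mem_image_of_mem f hxz⟩

theorem exists_isExposed_mem_intrinsicInterior_of_mem_convexHull (hs : s.Finite)
    (hx : x ∈ convexHull ℝ s) :
    ∃ t, IsExposed ℝ (convexHull ℝ s) t ∧ x ∈ intrinsicInterior ℝ t := by
  obtain ⟨l, hl⟩ := exists_dual_nonneg_and_neg_mem_of_fg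
    (C := PointedCone.hull ℝ (-x +ᵥ s)) (Submodule.fg_span hs.vadd_set)
  have hlx {y : E} (hy : y ∈ convexHull ℝ s) : l x ≤ l y := by
    simpa using (hl _ (sub_mem_hull_neg_vadd hy)).1
  let t := (-l.toContinuousLinearMap).toExposed (convexHull ℝ s)
  have hmem {y : E} : y ∈ t ↔ y ∈ convexHull ℝ s ∧ l y = l x :=
    ⟨fun ⟨hy, h⟩ ↦ ⟨hy, (hlx hy).antisymm' (by simpa using h x hx)⟩,
      fun ⟨hy, h⟩ ↦ ⟨hy, fun z hz ↦ by simpa [h] using hlx hz⟩⟩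
  have ht : IsExposed ℝ (convexHull ℝ s) t := ContinuousLinearMap.toExposed.isExposed
  refine ⟨t, ht, (mem_intrinsicInterior_iff_forall_exists_mem_openSegment
    (ht.convex (convex_convexHull ℝ s))).2 ⟨hmem.2 ⟨hx, rfl⟩, fun y hy ↦ ?_⟩⟩
  obtain ⟨hyP, hly⟩ := hmem.1 hy
  obtain ⟨c, hc, z, hz, hxy⟩ := exists_eq_smul_sub_of_mem_hull_neg_vadd hx
    ((hl _ (sub_mem_hull_neg_vadd hyP)).2 (by simp [hly]))
  have hlz : l z = l x := by
    simpa [hly, hc.ne', sub_eq_zero] using congrArg l hxy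
  have hyz : y + c • z = (1 + c) • x := by
    rw [smul_sub, neg_sub, sub_eq_sub_iff_add_eq_add] at hxy
    rw [add_smul, one_smul, hxy, add_comm]
  refine ⟨z, hmem.2 ⟨hz, hlz⟩, (1 + c)⁻¹, (1 + c)⁻¹ * c, by positivity, by positivity,
    by field_simp, ?_⟩
  rw [mul_smul, ← smul_add, hyz, inv_smul_smul₀ (by positivity)]

theorem exists_mem_openSegment_iff_exists_isExposed (hs : s.Finite) (hy : y ∈ convexHull ℝ s) :
    (∃ z ∈ convexHull ℝ s, x ∈ openSegment ℝ y z) ↔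
      ∃ t, IsExposed ℝ (convexHull ℝ s) t ∧ y ∈ t ∧ x ∈ intrinsicInterior ℝ t := by
  constructor
  · rintro ⟨z, hz, hxz⟩
    obtain ⟨t, ht, hxt⟩ := exists_isExposed_mem_intrinsicInterior_of_mem_convexHull hs
      ((convex_convexHull ℝ s).openSegment_subset hy hz hxz)
    exact ⟨t, ht, ht.isExtreme.left_mem_of_mem_openSegment hy hz
      (intrinsicInterior_subset hxt) hxz, hxt⟩
  · rintro ⟨t, ht, hyt, hxt⟩
    obtain ⟨z, hz, hxz⟩ := exists_mem_openSegment_of_mem_intrinsicInterior hxt hyt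
    exact ⟨z, ht.subset hz, hxz⟩

end NormedSpace

end IntrinsicInterior

section Cone

open Set

variable {E ι : Type*} [NormedAddCommGroup E] [NormedSpace ℝ E] {C D : PointedCone ℝ E} {x y : E}

theorem intrinsicInterior_cone_mono (hCD : C ≤ D)
    (hspan : Submodule.span ℝ (C : Set E) = Submodule.span ℝ (D : Set E)) :
    intrinsicInterior ℝ (C : Set E) ⊆ intrinsicInterior ℝ D := by
  have haff (B : PointedCone ℝ E) :
      (affineSpan ℝ (B : Set E) : Set E) = Submodule.span ℝ (B : Set E) := by
    rw [← affineSpan_insert_zero, insert_eq_of_mem B.zero_mem]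
  refine intrinsicInterior_mono_of_affineSpan_eq hCD (SetLike.coe_injective ?_)
  rw [haff, haff, hspan]

theorem intrinsicInterior_subset_intrinsicInterior_biSup {J : Finset ι} {C : ι → PointedCone ℝ E}
    (hspan : ∀ i ∈ J, ∀ j ∈ J,
      Submodule.span ℝ (C i : Set E) = Submodule.span ℝ (C j : Set E)) {i : ι} (hi : i ∈ J) :
    intrinsicInterior ℝ (C i : Set E) ⊆ intrinsicInterior ℝ ↑(⨆ i ∈ J, C i) := by
  have hle : C i ≤ ⨆ i ∈ J, C i := le_biSup C hi
  refine intrinsicInterior_cone_mono hle (le_antisymm (Submodule.span_mono hle) ?_)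
  have hsup : ⨆ i ∈ J, C i ≤ (Submodule.span ℝ (C i : Set E)).restrictScalars _ :=
    iSup₂_le fun j hj ↦ by
      rw [hspan i hi j hj]
      exact Submodule.subset_span
  exact Submodule.span_le.2 hsup

variable [FiniteDimensional ℝ E]

theorem add_mem_intrinsicInterior_cone (hx : x ∈ intrinsicInterior ℝ (C : Set E)) (hy : y ∈ C) :
    x + y ∈ intrinsicInterior ℝ (C : Set E) := by
  refine (mem_intrinsicInterior_iff_forall_exists_mem_openSegment C.convex).2
    ⟨add_mem (intrinsicInterior_subset hx) hy, fun w hw ↦ ?_⟩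
  obtain ⟨z, hz, p, q, hp, hq, hpq, rfl⟩ := exists_mem_openSegment_of_mem_intrinsicInterior hx hw
  refine ⟨z + q⁻¹ • y, add_mem hz (C.smul_mem (inv_nonneg.2 hq.le) hy),
    p, q, hp, hq, hpq, ?_⟩
  rw [smul_add, smul_inv_smul₀ hq.ne', add_assoc]

theorem sum_intrinsicInterior_cone_union_zero {J : Finset ι} {C : ι → PointedCone ℝ E}
    (hspan : ∀ i ∈ J, ∀ j ∈ J,
      Submodule.span ℝ (C i : Set E) = Submodule.span ℝ (C j : Set E)) :
    ∑ i ∈ J, (intrinsicInterior ℝ (C i : Set E) ∪ {0}) =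
      intrinsicInterior ℝ (↑(⨆ i ∈ J, C i) : Set E) ∪ {0} := by
  have hle (i : ι) (hi : i ∈ J) : C i ≤ ⨆ i ∈ J, C i := le_biSup C hi
  refine Subset.antisymm (fun x hx ↦ ?_) (union_subset (fun x hx ↦ ?_) ?_)
  · classical
    obtain ⟨g, hg, rfl⟩ := (Set.mem_finsetSum _ _ _).1 hx
    by_cases! hg0 : ∀ i ∈ J, g i = 0
    · exact .inr (Finset.sum_eq_zero hg0)
    obtain ⟨i, hi, hgi⟩ := hg0
    have hrest : ∑ j ∈ J.erase i, g j ∈ ⨆ i ∈ J, C i := sum_mem fun j hj ↦ by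
      have hjJ := Finset.mem_of_mem_erase hj
      rcases hg hjJ with h | h
      · exact hle j hjJ (intrinsicInterior_subset h)
      · rw [mem_singleton_iff.1 h]
        exact zero_mem _
    rw [← Finset.add_sum_erase J g hi]
    exact .inl <| add_mem_intrinsicInterior_cone
      (intrinsicInterior_subset_intrinsicInterior_biSup hspan hi ((hg hi).resolve_right hgi)) hrest
  · choose p hp using fun i ↦
      Set.Nonempty.intrinsicInterior (C i).convex ⟨0, (C i).zero_mem⟩
    have hpC : ∑ i ∈ J, p i ∈ ⨆ i ∈ J, C i :=
      sum_mem fun i hi ↦ hle i hi (intrinsicInterior_subset (hp i))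
    obtain ⟨z, hz, hxz⟩ := exists_mem_openSegment_of_mem_intrinsicInterior hx hpC
    obtain ⟨μ, rfl⟩ := (Submodule.mem_iSup_finset_iff_exists_sum C z).1 hz
    obtain ⟨a, b, ha, hb, hab, rfl⟩ := hxz
    rw [Finset.smul_sum, Finset.smul_sum, ← Finset.sum_add_distrib]
    exact (Set.mem_finsetSum _ _ _).2 ⟨_, fun {i} _ ↦ .inl <| openSegment_subset_intrinsicInterior
      (C i).convex (hp i) (μ i).2 ⟨a, b, ha, hb, hab, rfl⟩, rfl⟩
  · rintro _ rfl
    exact (Set.mem_finsetSum _ _ _).2 ⟨0, fun _ ↦ .inr rfl, by simp⟩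

end Cone

section Combinations

open Set Filter Topology

theorem exists_forall_mem_eq_sum_smul_iff {R E : Type*} [Semiring R] [AddCommMonoid E] [Module R E]
    (G : Finset E) (S : Set R) (x : E) :
    (∃ a : E → R, (∀ v ∈ G, a v ∈ S) ∧ x = ∑ v ∈ G, a v • v) ↔
      x ∈ Fintype.linearCombination R ((↑) : G → E) '' univ.pi fun _ ↦ S := by
  classical
  constructor
  · rintro ⟨a, ha, rfl⟩
    exact ⟨fun v ↦ a v, fun v _ ↦ ha v v.2, G.sum_coe_sort fun v ↦ a v • v⟩
  · rintro ⟨a, ha, rfl⟩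
    refine ⟨fun v ↦ if hv : v ∈ G then a ⟨v, hv⟩ else 0,
      fun v hv ↦ by simpa [hv] using ha ⟨v, hv⟩, ?_⟩
    rw [Fintype.linearCombination_apply, ← G.sum_coe_sort]
    simp

theorem exists_eq_sum_smul_iff_exists_mem_openSegment {ι E : Type*} [Fintype ι]
    [AddCommGroup E] [Module ℝ E] (v : ι → E) (x : E) :
    (∃ a : ι → ℝ, (∀ i, 0 < a i ∧ a i ≤ 1) ∧ x = ∑ i, a i • v i) ↔
      ∃ z ∈ parallelepiped v, x ∈ openSegment ℝ (∑ i, v i) z := by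
  constructor
  · rintro ⟨a, ha, rfl⟩
    obtain ⟨δ, ⟨hδ0, hδ1⟩, hδa⟩ : ∃ δ ∈ Ioo (0 : ℝ) 1, ∀ i, δ < a i :=
      ((eventually_mem_set.2 (Ioo_mem_nhdsGT one_pos)).and (eventually_all.2 fun i ↦
        (eventually_lt_nhds (ha i).1).filter_mono nhdsWithin_le_nhds)).exists
    have hδ : 0 < 1 - δ := sub_pos.2 hδ1
    refine ⟨_, ⟨fun i ↦ (a i - δ) / (1 - δ), ⟨fun i ↦ ?_, fun i ↦ ?_⟩, rfl⟩, δ, 1 - δ, hδ0, hδ,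
      add_sub_cancel _ _, ?_⟩
    · exact div_nonneg (sub_nonneg.2 (hδa i).le) hδ.le
    · exact (div_le_one hδ).2 (sub_le_sub_right (ha i).2 δ)
    · simp only [Finset.smul_sum, smul_smul, mul_div_cancel₀ _ hδ.ne', ← Finset.sum_add_distrib,
        ← add_smul, add_sub_cancel]
  · rintro ⟨_, ⟨c, ⟨hc0, hc1⟩, rfl⟩, p, q, hp, hq, hpq, rfl⟩
    refine ⟨fun i ↦ p + q * c i, fun i ↦ ⟨?_, ?_⟩, ?_⟩
    · exact add_pos_of_pos_of_nonneg hp (mul_nonneg hq.le (hc0 i))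
    · exact (add_le_add_right (mul_le_of_le_one_right hq.le (hc1 i)) p).trans_eq hpq
    · simp [add_smul, mul_smul, Finset.sum_add_distrib, Finset.smul_sum]

theorem exists_eq_sum_smul_iff_exists_isExposed {ι E : Type*} [Fintype ι] [NormedAddCommGroup E]
    [NormedSpace ℝ E] [FiniteDimensional ℝ E] (v : ι → E) (x : E) :
    (∃ a : ι → ℝ, (∀ i, 0 < a i ∧ a i ≤ 1) ∧ x = ∑ i, a i • v i) ↔
      ∃ t, IsExposed ℝ (parallelepiped v) t ∧ ∑ i, v i ∈ t ∧ x ∈ intrinsicInterior ℝ t := by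
  have hfin : (∑ i, ({0, v i} : Set E)).Finite :=
    Finset.sum_induction _ Set.Finite (fun _ _ ↦ .add) finite_zero fun _ _ ↦ toFinite _
  have hσ : ∑ i, v i ∈ parallelepiped v :=
    (mem_parallelepiped_iff v _).2 ⟨1, right_mem_Icc.2 zero_le_one, by simp⟩
  rw [exists_eq_sum_smul_iff_exists_mem_openSegment]
  rw [parallelepiped_eq_convexHull] at hσ ⊢
  exact exists_mem_openSegment_iff_exists_isExposed hfin hσ

end Combinations

section LinearPathScheme

open Set

variable {d : ℕ} {ι : Type*}

theorem posF_eq_intrinsicInterior_coneF (G : Finset (Fin d → ℝ)) :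
    posF G = intrinsicInterior ℝ (coneF G) := by
  let f := Fintype.linearCombination ℝ ((↑) : G → Fin d → ℝ)
  have hpos : posF G = f '' univ.pi fun _ ↦ Ioi 0 :=
    Set.ext fun x ↦ exists_forall_mem_eq_sum_smul_iff G (Ioi 0) x
  have hcone : coneF G = f '' univ.pi fun _ ↦ Ici 0 :=
    Set.ext fun x ↦ exists_forall_mem_eq_sum_smul_iff G (Ici 0) x
  have hint : interior (univ.pi fun _ : G ↦ Ici (0 : ℝ)) = univ.pi fun _ ↦ Ioi 0 := by
    simp only [interior_pi_set finite_univ, interior_Ici]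
  have hne : (interior (univ.pi fun _ : G ↦ Ici (0 : ℝ))).Nonempty := hint ▸ ⟨1, by simp⟩
  rw [hpos, hcone, intrinsicInterior_linear_image (convex_pi fun _ _ ↦ convex_Ici 0),
    intrinsicInterior_eq_interior hne, hint]

theorem coneF_eq_hull (G : Finset (Fin d → ℝ)) :
    coneF G = PointedCone.hull ℝ (G : Set (Fin d → ℝ)) := by
  ext x
  constructor
  · rintro ⟨a, ha, rfl⟩
    exact sum_mem fun v hv ↦ PointedCone.smul_mem _ (ha v hv) (Submodule.subset_span hv)
  · intro hx
    obtain ⟨a, -, rfl⟩ := Submodule.mem_span_finset.1 hx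
    exact ⟨fun v ↦ a v, fun v _ ↦ (a v).2, rfl⟩

theorem coneF_biUnion [DecidableEq (Fin d → ℝ)] (J : Finset ι)
    (G : ι → Finset (Fin d → ℝ)) :
    coneF (J.biUnion G) = ↑(⨆ i ∈ J, PointedCone.hull ℝ (G i : Set (Fin d → ℝ))) := by
  rw [coneF_eq_hull, Finset.coe_biUnion, PointedCone.hull, Submodule.span_iUnion₂]
  rfl

theorem sum_posF_union_zero [DecidableEq (Fin d → ℝ)] {J : Finset ι}
    {G : ι → Finset (Fin d → ℝ)}
    (hspan : ∀ i ∈ J, ∀ j ∈ J, Submodule.span ℝ (G i : Set (Fin d → ℝ)) =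
      Submodule.span ℝ (G j : Set (Fin d → ℝ))) :
    ∑ i ∈ J, (posF (G i) ∪ {0}) = intrinsicInterior ℝ (coneF (J.biUnion G)) ∪ {0} := by
  rw [coneF_biUnion]
  simp only [posF_eq_intrinsicInterior_coneF, coneF_eq_hull]
  refine sum_intrinsicInterior_cone_union_zero fun i hi j hj ↦ ?_
  simpa [PointedCone.hull] using hspan i hi j hj

variable {m : ℕ} (h : Fin m → Fin d → ℝ)

theorem zonoSet_eq_parallelepiped : zonoSet h = parallelepiped h := by
  ext x
  simp [zonoSet, mem_parallelepiped_iff, Pi.le_def, forall_and]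

theorem isZonoFace_iff {F : Set (Fin d → ℝ)} :
    IsZonoFace h F ↔ F.Nonempty ∧ IsExposed ℝ (zonoSet h) F := by
  refine and_congr_right fun hF ↦ ⟨fun ⟨l, hl⟩ _ ↦ ⟨l.toContinuousLinearMap, hl⟩, fun hl ↦ ?_⟩
  obtain ⟨l, hl⟩ := hl hF
  exact ⟨l, hl⟩

theorem setOf_exists_eq_sum_smul_eq_intrinsicInterior_union_adjSet :
    {x | ∃ a : Fin m → ℝ, (∀ i, 0 < a i ∧ a i ≤ 1) ∧ x = ∑ i, a i • h i} =
      intrinsicInterior ℝ (zonoSet h) ∪ adjSet h := by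
  have hσ : ∑ i, h i ∈ zonoSet h := ⟨1, by simp, by simp⟩
  have hmem (x : Fin d → ℝ) :
      (∃ a : Fin m → ℝ, (∀ i, 0 < a i ∧ a i ≤ 1) ∧ x = ∑ i, a i • h i) ↔
        ∃ F, IsExposed ℝ (zonoSet h) F ∧ ∑ i, h i ∈ F ∧ x ∈ intrinsicInterior ℝ F := by
    rw [zonoSet_eq_parallelepiped, exists_eq_sum_smul_iff_exists_isExposed]
  ext x
  rw [mem_ofPred_eq, hmem]
  simp only [adjSet, isZonoFace_iff, mem_union, mem_iUnion, mem_singleton_iff, mem_ofPred_eq,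
    exists_prop]
  refine ⟨fun ⟨F, hF, hσF, hx⟩ ↦ .inr (.inr ⟨F, ⟨⟨⟨_, hσF⟩, hF⟩, hσF⟩, hx⟩), ?_⟩
  rintro (hx | rfl | ⟨F, ⟨⟨-, hF⟩, hσF⟩, hx⟩)
  · exact ⟨_, .refl _, hσ, hx⟩
  · exact (hmem _).1 ⟨1, by simp, by simp⟩
  · exact ⟨F, hF, hσF, hx⟩

theorem lps_reach_geometry_general {m : ℕ} {κ : Type*} [Fintype ι] [Fintype κ]
    [DecidableEq (Fin d → ℝ)] (h : Fin m → Fin d → ℝ)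
    (G : ι → Finset (Fin d → ℝ)) (I : κ → Finset ι)
    (hdisj : ∀ j₁ j₂, j₁ ≠ j₂ → Disjoint (I j₁) (I j₂)) (hcover : ∀ i, ∃ j, i ∈ I j)
    (hspan : ∀ l, ∀ i ∈ I l, ∀ j ∈ I l,
      Submodule.span ℝ (G i : Set (Fin d → ℝ)) = Submodule.span ℝ (G j : Set (Fin d → ℝ))) :
    {x | ∃ a : Fin m → ℝ, (∀ i, 0 < a i ∧ a i ≤ 1) ∧ x = ∑ i, a i • h i} +
        ∑ i, (posF (G i) ∪ {0}) =
      (intrinsicInterior ℝ (zonoSet h) ∪ adjSet h) +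
        ∑ j, (intrinsicInterior ℝ (coneF ((I j).biUnion G)) ∪ {0}) := by
  classical
  have hpartition : (Finset.univ : Finset ι) = Finset.univ.biUnion I := by
    ext i
    simpa using hcover i
  rw [setOf_exists_eq_sum_smul_eq_intrinsicInterior_union_adjSet, hpartition,
    Finset.sum_biUnion fun j₁ _ j₂ _ hne ↦ hdisj j₁ j₂ hne]
  simp only [sum_posF_union_zero (hspan _)]

end LinearPathScheme

/-- Theorem 3, geometric form. Let `d ≥ 1`, let
`h : Fin m → ℝ^d` satisfy the defining conditions of `G_M`, let
`G₁, …, Gₙ ⊆ ℝ^d` be finite sets and let `I₁, …, I_k` be a partition of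
`{1, …, n}` such that the spans of the `G_i` agree within each class. Then
the Minkowski sum of the set `{∑ i, a i • h i | ∀ i, 0 < a i ≤ 1}` with the
sets `pos(G_i) ∪ {0}` equals the Minkowski sum of
`relint(zono(h)) ∪ adj(h)` with the sets
`relint(cone(⋃_{i ∈ I_j} G_i)) ∪ {0}`. -/
theorem lps_reach_geometry (d m n k : ℕ) (hd : 1 ≤ d)
    [DecidableEq (Fin d → ℝ)]
    (h : Fin m → (Fin d → ℝ)) (hh0 : ∀ i, h i ≠ 0)
    (hhm : ∀ i j, i ≠ j → ∀ c : ℝ, 0 ≤ c → h i ≠ c • h j)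
    (G : Fin n → Finset (Fin d → ℝ)) (I : Fin k → Finset (Fin n))
    (hne : ∀ j, (I j).Nonempty)
    (hdisj : ∀ j₁ j₂, j₁ ≠ j₂ → Disjoint (I j₁) (I j₂))
    (hcover : ∀ i : Fin n, ∃ j, i ∈ I j)
    (hspan : ∀ (l : Fin k), ∀ i ∈ I l, ∀ j ∈ I l,
      Submodule.span ℝ (G i : Set (Fin d → ℝ)) =
        Submodule.span ℝ (G j : Set (Fin d → ℝ))) :
    ({x : Fin d → ℝ | ∃ a : Fin m → ℝ, (∀ i, 0 < a i ∧ a i ≤ 1) ∧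
        x = ∑ i, a i • h i} +
      ∑ i : Fin n, (posF (G i) ∪ {0})) =
    ((intrinsicInterior ℝ (zonoSet h) ∪ adjSet h) +
      ∑ j : Fin k,
        (intrinsicInterior ℝ (coneF ((I j).biUnion G)) ∪ {0})) := 
  lps_reach_geometry_general h G I hdisj hcover hspan
end

section
/- Let σ = π₀χ₁*π₁⋯χₙ*πₙ be a linear path scheme over a continuous VASS of dimension d (ℚ-semantics). Then Reach(σ) = Reach(π₀π₁⋯πₙ) + ∑_{i=1}^n Reach(χ_i*), where + denotes iterated Minkowski sum. (Lemma: the reachability set of an LPS is the Minkowski sum of the reachability set of its concatenated path part and the reachability sets of its cycles.) -/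
open Pointwise

/-- A continuous VASS of dimension `d`: a finite set of states `Q`,
a finite set of transitions `T ⊆ Q × Q`, and a labelling of transitions
by vectors in `ℚ^d`. -/
structure CVASS (d : ℕ) where
  Q : Type
  [deceq : DecidableEq Q]
  [fin : Fintype Q]
  T : Finset (Q × Q)
  label : Q × Q → (Fin d → ℚ)

attribute [instance] CVASS.deceq CVASS.fin

namespace CVASS

variable {d : ℕ} (V : CVASS d)

/-- `V.PathFrom p π q` : the list of transitions `π` is a valid path of `V`
from state `p` to state `q`. -/
inductive PathFrom : V.Q → List (V.Q × V.Q) → V.Q → Prop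
  | nil (p : V.Q) : PathFrom p [] p
  | cons {p q r : V.Q} {rest : List (V.Q × V.Q)} :
      (p, q) ∈ V.T → PathFrom q rest r → PathFrom p ((p, q) :: rest) r

/-- `V.RunFrom p x π q y` : there is a run of `V` lifted from the path `π`,
starting in configuration `p(x)` and ending in configuration `q(y)`, where
each transition is scaled by some rational coefficient in `(0,1]`
(ℚ-semantics: counters may become negative). -/
inductive RunFrom : V.Q → (Fin d → ℚ) → List (V.Q × V.Q) → V.Q → (Fin d → ℚ) → Prop
  | nil (p : V.Q) (x : Fin d → ℚ) : RunFrom p x [] p x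
  | cons {p q r : V.Q} {x y : Fin d → ℚ} {α : ℚ} {rest : List (V.Q × V.Q)} :
      (p, q) ∈ V.T → 0 < α → α ≤ 1 →
      RunFrom q (x + α • V.label (p, q)) rest r y →
      RunFrom p x ((p, q) :: rest) r y

/-- `V.NNRunFrom p x π q y` : as `RunFrom`, but every configuration along the
run (including the first and the last one) must have nonnegative counters
(ℚ≥0-semantics). -/
inductive NNRunFrom : V.Q → (Fin d → ℚ) → List (V.Q × V.Q) → V.Q → (Fin d → ℚ) → Prop
  | nil (p : V.Q) (x : Fin d → ℚ) : (∀ i, 0 ≤ x i) → NNRunFrom p x [] p x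
  | cons {p q r : V.Q} {x y : Fin d → ℚ} {α : ℚ} {rest : List (V.Q × V.Q)} :
      (p, q) ∈ V.T → (∀ i, 0 ≤ x i) → 0 < α → α ≤ 1 →
      NNRunFrom q (x + α • V.label (p, q)) rest r y →
      NNRunFrom p x ((p, q) :: rest) r y

end CVASS

/-- The list of states visited by a path `π` starting at state `p`. -/
def pathStates {Q : Type} (p : Q) (π : List (Q × Q)) : List Q :=
  p :: π.map Prod.snd

/-- A path is simple if it visits no state twice. -/
def SimplePath {Q : Type} (p : Q) (π : List (Q × Q)) : Prop :=
  (pathStates p π).Nodup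

/-- A cycle is simple if it is nonempty and visits no state twice, except
that its first state equals its last state. -/
def SimpleCycle {Q : Type} (π : List (Q × Q)) : Prop :=
  π ≠ [] ∧ (π.map Prod.snd).Nodup

/-- The path `π₀ χ₁^{k₁} π₁ ⋯ χₙ^{kₙ} πₙ` determined by a linear path scheme
`π₀ χ₁* π₁ ⋯ χₙ* πₙ` (given by the paths `πs` and the cycles `χs`) and
exponents `ks`. -/
def lpsConcat {Q : Type} {n : ℕ} (πs : Fin (n + 1) → List (Q × Q))
    (χs : Fin n → List (Q × Q)) (ks : Fin n → ℕ) : List (Q × Q) :=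
  πs 0 ++ (List.ofFn fun i : Fin n =>
    (List.replicate (ks i) (χs i)).flatten ++ πs i.succ).flatten

/-!
Over `ℚ` a configuration may leave the nonnegative orthant, so whether a path can be fired does not
depend on the current counters: along a valid path `π` the reachable set is the Minkowski sum of
the half-open segments `(0, 1] • ℓ(t)` over the transitions `t` of `π`. This sum is insensitive to
the order of the transitions, so the copies of the cycles in `π₀χ₁^{k₁}π₁⋯χₙ^{kₙ}πₙ` can be moved
past the `πᵢ`, and Minkowski addition distributes over the union over all exponents.
-/

theorem iUnion_sum_eq_sum_iUnion {ι M : Type*} {κ : ι → Sort*} [Fintype ι] [AddCommMonoid M]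
    (A : ∀ i, κ i → Set M) :
    ⋃ k : ∀ i, κ i, ∑ i, A i (k i) = ∑ i, ⋃ j, A i j := by
  ext v
  simp only [Set.mem_iUnion, Set.mem_fintype_sum]
  constructor
  · rintro ⟨k, g, hg, hv⟩
    exact ⟨g, fun i ↦ ⟨k i, hg i⟩, hv⟩
  · rintro ⟨g, hg, hv⟩
    choose k hk using @hg
    exact ⟨fun i ↦ k i, g, fun i ↦ hk i, hv⟩

namespace CVASS

variable {d : ℕ} {V : CVASS d}

section PathFrom

variable {p q r : V.Q} {π π' : List (V.Q × V.Q)}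

theorem PathFrom.append (hπ : V.PathFrom p π q) (hπ' : V.PathFrom q π' r) :
    V.PathFrom p (π ++ π') r := by
  induction hπ with
  | nil => exact hπ'
  | cons ht _ ih => exact .cons ht (ih hπ')

theorem PathFrom.flatten_replicate (hπ : V.PathFrom p π p) (k : ℕ) :
    V.PathFrom p (List.replicate k π).flatten p := by
  induction k with
  | zero => exact .nil p
  | succ k ih => exact hπ.append ih

theorem PathFrom.flatten_ofFn {n : ℕ} {s : Fin (n + 1) → V.Q} {πs : Fin n → List (V.Q × V.Q)}
    (hπs : ∀ i, V.PathFrom (s i.castSucc) (πs i) (s i.succ)) :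
    V.PathFrom (s 0) (List.ofFn πs).flatten (s (Fin.last n)) := by
  induction n with
  | zero => exact .nil _
  | succ n ih =>
    rw [List.ofFn_succ, List.flatten_cons]
    exact (hπs 0).append (ih (s := fun i ↦ s i.succ) fun i ↦ hπs i.succ)

theorem PathFrom.lpsConcat {n : ℕ} {s : Fin (n + 2) → V.Q}
    {πs : Fin (n + 1) → List (V.Q × V.Q)} {χs : Fin n → List (V.Q × V.Q)}
    (hπs : ∀ i, V.PathFrom (s i.castSucc) (πs i) (s i.succ))
    (hχs : ∀ i : Fin n, V.PathFrom (s i.succ.castSucc) (χs i) (s i.succ.castSucc))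
    (ks : Fin n → ℕ) : V.PathFrom (s 0) (lpsConcat πs χs ks) (s (Fin.last (n + 1))) :=
  (hπs 0).append <| flatten_ofFn (s := fun i ↦ s i.succ) fun i ↦
    ((hχs i).flatten_replicate (ks i)).append (hπs i.succ)

end PathFrom

section Effects

variable (V)

/-- The counter displacements that firing the transition `t` once can produce: the half-open
segment `(0, 1] • ℓ(t)`. -/
def transitionEffects (t : V.Q × V.Q) : Set (Fin d → ℚ) :=
  (fun α : ℚ ↦ α • V.label t) '' Set.Ioc 0 1

/-- The Minkowski sum of the effects of the transitions in `π`, that is, the counter displacements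
of the runs lifted from `π`. It is defined for an arbitrary list of transitions, so that it can be
computed without tracking states. -/
def pathEffects (π : List (V.Q × V.Q)) : Set (Fin d → ℚ) :=
  (π.map V.transitionEffects).sum

@[simp]
theorem pathEffects_nil : V.pathEffects [] = 0 := rfl

theorem pathEffects_cons (t : V.Q × V.Q) (π : List (V.Q × V.Q)) :
    V.pathEffects (t :: π) = V.transitionEffects t + V.pathEffects π := by
  simp [pathEffects]

theorem pathEffects_append (π π' : List (V.Q × V.Q)) :
    V.pathEffects (π ++ π') = V.pathEffects π + V.pathEffects π' := by
  simp [pathEffects]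

theorem pathEffects_flatten_ofFn {n : ℕ} (πs : Fin n → List (V.Q × V.Q)) :
    V.pathEffects (List.ofFn πs).flatten = ∑ i, V.pathEffects (πs i) := by
  simp [pathEffects, List.sum_flatten, List.map_ofFn, List.sum_ofFn]

theorem pathEffects_lpsConcat {n : ℕ} (πs : Fin (n + 1) → List (V.Q × V.Q))
    (χs : Fin n → List (V.Q × V.Q)) (ks : Fin n → ℕ) :
    V.pathEffects (lpsConcat πs χs ks) =
      V.pathEffects (List.ofFn πs).flatten +
        ∑ i, V.pathEffects (List.replicate (ks i) (χs i)).flatten := by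
  simp only [lpsConcat, pathEffects_append, pathEffects_flatten_ofFn, Finset.sum_add_distrib,
    Fin.sum_univ_succ]
  abel

variable {V}

theorem mem_pathEffects_cons {t : V.Q × V.Q} {π : List (V.Q × V.Q)} {v : Fin d → ℚ} :
    v ∈ V.pathEffects (t :: π) ↔
      ∃ α ∈ Set.Ioc (0 : ℚ) 1, v - α • V.label t ∈ V.pathEffects π := by
  simp [pathEffects_cons, transitionEffects, Set.mem_add, ← eq_sub_iff_add_eq']

end Effects

section RunFrom

variable {p q r : V.Q} {π : List (V.Q × V.Q)} {x y : Fin d → ℚ}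

theorem runFrom_nil_iff : V.RunFrom p x [] p y ↔ y = x := by
  constructor
  · rintro ⟨⟩
    rfl
  · rintro rfl
    exact .nil p y

theorem runFrom_cons_iff (ht : (p, q) ∈ V.T) :
    V.RunFrom p x ((p, q) :: π) r y ↔
      ∃ α ∈ Set.Ioc (0 : ℚ) 1, V.RunFrom q (x + α • V.label (p, q)) π r y := by
  constructor
  · rintro (_ | ⟨-, hα₀, hα₁, hrun⟩)
    exact ⟨_, ⟨hα₀, hα₁⟩, hrun⟩
  · rintro ⟨α, ⟨hα₀, hα₁⟩, hrun⟩
    exact .cons ht hα₀ hα₁ hrun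

theorem PathFrom.runFrom_iff_sub_mem_pathEffects (hπ : V.PathFrom p π q) :
    V.RunFrom p x π q y ↔ y - x ∈ V.pathEffects π := by
  induction hπ generalizing x with
  | nil => simp [runFrom_nil_iff, sub_eq_zero]
  | cons ht _ ih => simp only [runFrom_cons_iff ht, mem_pathEffects_cons, ih, sub_sub]

theorem setOf_runFrom_eq_pathEffects (hπ : V.PathFrom p π q) :
    {y | V.RunFrom p 0 π q y} = V.pathEffects π := by
  ext y
  rw [Set.mem_ofPred_eq, hπ.runFrom_iff_sub_mem_pathEffects, sub_zero]

theorem setOf_exists_runFrom_eq_iUnion_pathEffects {ι : Sort*} {πs : ι → List (V.Q × V.Q)}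
    (hπs : ∀ i, V.PathFrom p (πs i) q) :
    {y | ∃ i, V.RunFrom p 0 (πs i) q y} = ⋃ i, V.pathEffects (πs i) := by
  simp only [Set.ofPred_exists, setOf_runFrom_eq_pathEffects (hπs _)]

end RunFrom

end CVASS

/-- Lemma: `Reach(σ) = Reach(π₀π₁⋯πₙ) + ∑ᵢ Reach(χᵢ*)`.
For a linear path scheme `σ = π₀ χ₁* π₁ ⋯ χₙ* πₙ` from `p` to `r` over a
continuous VASS of dimension `d` (ℚ-semantics), the reachability set of `σ`
from `p(0)` is the Minkowski sum of the reachability set of the concatenated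
path `π₀ π₁ ⋯ πₙ` and the reachability sets of the iterated cycles `χᵢ*`. -/
theorem lps_reach_eq_minkowski_sum {d : ℕ} (V : CVASS d) (p r : V.Q) (n : ℕ)
    (s : Fin (n + 2) → V.Q) (πs : Fin (n + 1) → List (V.Q × V.Q))
    (χs : Fin n → List (V.Q × V.Q))
    (hs0 : s 0 = p) (hsl : s (Fin.last (n + 1)) = r)
    (hπs : ∀ i : Fin (n + 1), V.PathFrom (s i.castSucc) (πs i) (s i.succ))
    (hχs : ∀ i : Fin n, V.PathFrom (s i.succ.castSucc) (χs i) (s i.succ.castSucc) ∧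
      χs i ≠ []) :
    {y : Fin d → ℚ | ∃ ks : Fin n → ℕ, V.RunFrom p 0 (lpsConcat πs χs ks) r y} =
      {y : Fin d → ℚ | V.RunFrom p 0 (List.ofFn πs).flatten r y} +
      ∑ i : Fin n,
        {y : Fin d → ℚ | ∃ k : ℕ,
          V.RunFrom (s i.succ.castSucc) 0 ((List.replicate k (χs i)).flatten)
            (s i.succ.castSucc) y} := by
  subst hs0 hsl
  have hcycle (i : Fin n) := (hχs i).1.flatten_replicate
  have hlps := CVASS.PathFrom.lpsConcat hπs fun i ↦ (hχs i).1
  rw [CVASS.setOf_exists_runFrom_eq_iUnion_pathEffects hlps,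
    CVASS.setOf_runFrom_eq_pathEffects (CVASS.PathFrom.flatten_ofFn hπs)]
  simp only [CVASS.setOf_exists_runFrom_eq_iUnion_pathEffects (hcycle _)]
  calc ⋃ ks, V.pathEffects (lpsConcat πs χs ks)
    _ = ⋃ ks : Fin n → ℕ, (V.pathEffects (List.ofFn πs).flatten +
          ∑ i, V.pathEffects (List.replicate (ks i) (χs i)).flatten) := by
      simp only [CVASS.pathEffects_lpsConcat]
    _ = V.pathEffects (List.ofFn πs).flatten +
          ∑ i, ⋃ k, V.pathEffects (List.replicate k (χs i)).flatten := by
      rw [← Set.add_iUnion, iUnion_sum_eq_sum_iUnion fun i k ↦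
        V.pathEffects (List.replicate k (χs i)).flatten]
end
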